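/- Let Ω⊆ℝ³ be open with coordinates (t,x,y), let u,v:Ω→ℝ be differentiable, let a,b:Ω→ℝ be twice differentiable and satisfy ∂_ta + u∂_xa + v∂_ya = 0 and ∂_tb + u∂_xb + v∂_yb = 0 on Ω, and suppose u = u₀(a,b) and v = v₀(a,b) for some C¹ functions u₀,v₀:ℝ²→ℝ. Let ρ₀:ℝ²→ℝ be differentiable and define ρ := ρ₀(a,b)·(∂_xa·∂_yb − ∂_ya·∂_xb). Then ∂_tρ + ∂_x(ρu) + ∂_y(ρv) = 0 on Ω. -/

import Mathlib

/-!
Differentiating the transport equation `DA (1, U) = 0` in space and exchanging the two derivatives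
gives `D_t M = -M N` along the flow, where `M` and `N` are the spatial derivatives of the labels
`A` and of the velocity `U`. Jacobi's formula turns this into `D_t (det M) = -(det M) (tr N)`,
invertible `M` or not, while `ρ₀ ∘ A` is constant along the flow. Hence `ρ = (ρ₀ ∘ A) * det M`
satisfies `D_t ρ + ρ * div U = 0`, which is the continuity equation.
-/

open Topology ContinuousLinearMap

section Determinant

variable {𝕜 V : Type*} [NontriviallyNormedField 𝕜] [NormedAddCommGroup V] [NormedSpace 𝕜 V]
  [FiniteDimensional 𝕜 V]

theorem hasDerivAt_det_one_add_smul (N : V →L[𝕜] V) :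
    HasDerivAt (fun s : 𝕜 => (1 + s • N).det) (LinearMap.trace 𝕜 V N) 0 := by
  let basis := Module.finBasis 𝕜 V
  let mat := LinearMap.toMatrix basis basis (N : V →ₗ[𝕜] V)
  have det_eq_eval (s : 𝕜) :
      (1 + s • N).det =
        (1 + (Polynomial.X : Polynomial 𝕜) • mat.map Polynomial.C).det.eval s := by
    rw [ContinuousLinearMap.det, ← LinearMap.det_toMatrix basis]
    simp [mat, eval_det, ← Matrix.smul_eq_mul_diagonal, LinearMap.toMatrix_one]
  simp only [det_eq_eval, LinearMap.trace_eq_matrix_trace 𝕜 basis,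
    ← Matrix.derivative_det_one_add_X_smul]
  exact Polynomial.hasDerivAt _ _

variable [CompleteSpace 𝕜]

theorem differentiable_det : Differentiable 𝕜 fun M : V →L[𝕜] V => M.det := by
  let basis := Module.finBasis 𝕜 V
  let entry (i j) : (V →L[𝕜] V) →ₗ[𝕜] 𝕜 :=
    Matrix.entryLinearMap 𝕜 𝕜 i j ∘ₗ (LinearMap.toMatrix basis basis).toLinearMap ∘ₗ coeLM 𝕜
  have det_eq_sum (M : V →L[𝕜] V) :
      M.det = ∑ σ : Equiv.Perm _, (σ.sign : 𝕜) * ∏ i, (entry (σ i) i).toContinuousLinearMap M := by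
    rw [ContinuousLinearMap.det, ← LinearMap.det_toMatrix basis, Matrix.det_apply']
    rfl
  simp only [det_eq_sum]
  fun_prop

theorem fderiv_det_apply_comp (M N : V →L[𝕜] V) :
    fderiv 𝕜 (fun L : V →L[𝕜] V => L.det) M (M ∘L N) = M.det * LinearMap.trace 𝕜 V N := by
  have det_line (s : 𝕜) : (M + s • M ∘L N).det = M.det * (1 + s • N).det := by
    have factor : M + s • M ∘L N = M ∘L (1 + s • N) := by ext; simp
    rw [factor, ContinuousLinearMap.det, toLinearMap_comp, LinearMap.det_comp]
  have along_line : HasDerivAt (fun s : 𝕜 => (M + s • M ∘L N).det)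
      (M.det * LinearMap.trace 𝕜 V N) 0 := by
    simpa only [det_line] using (hasDerivAt_det_one_add_smul N).const_mul M.det
  rw [← (differentiable_det M).lineDeriv_eq_fderiv]
  exact along_line.deriv

end Determinant

section Plane

variable {𝕜 : Type*} [NontriviallyNormedField 𝕜] (L : 𝕜 × 𝕜 →L[𝕜] 𝕜 × 𝕜)

theorem det_eq_apply_basis :
    L.det = (L (1, 0)).1 * (L (0, 1)).2 - (L (0, 1)).1 * (L (1, 0)).2 := by
  rw [ContinuousLinearMap.det, ← LinearMap.det_toMatrix (.finTwoProd 𝕜), Matrix.det_fin_two]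
  simp [LinearMap.toMatrix_apply]

theorem trace_eq_apply_basis :
    LinearMap.trace 𝕜 (𝕜 × 𝕜) L = (L (1, 0)).1 + (L (0, 1)).2 := by
  rw [LinearMap.trace_eq_matrix_trace 𝕜 (.finTwoProd 𝕜), Matrix.trace_fin_two]
  simp [LinearMap.toMatrix_apply]

end Plane

section SecondDerivative

variable {E F G : Type*} [NormedAddCommGroup E] [NormedSpace ℝ E]
  [NormedAddCommGroup F] [NormedSpace ℝ F] [NormedAddCommGroup G] [NormedSpace ℝ G]

/-- Twice (Fréchet) differentiable at a point, with no continuity of the second derivative. -/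
def TwiceDifferentiableAt (f : E → F) (p : E) : Prop :=
  (∀ᶠ q in 𝓝 p, DifferentiableAt ℝ f q) ∧ DifferentiableAt ℝ (fderiv ℝ f) p

theorem TwiceDifferentiableAt.prodMk {f : E → F} {g : E → G} {p : E}
    (hf : TwiceDifferentiableAt f p) (hg : TwiceDifferentiableAt g p) :
    TwiceDifferentiableAt (fun q => (f q, g q)) p := by
  refine ⟨hf.1.and hg.1 |>.mono fun q h => h.1.prodMk h.2, ?_⟩
  have fderiv_eq : fderiv ℝ (fun q => (f q, g q)) =ᶠ[𝓝 p]
      fun q => (fderiv ℝ f q).prod (fderiv ℝ g q) :=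
    hf.1.and hg.1 |>.mono fun q h => h.1.fderiv_prodMk h.2
  have prod_differentiable := (prodL ℝ).differentiableAt.comp p (hf.2.prodMk hg.2)
  exact prod_differentiable.congr_of_eventuallyEq fderiv_eq

theorem fderiv_fderiv_apply_of_transported {f : E → F} {X : E → E} {p : E}
    (hf : TwiceDifferentiableAt f p) (hX : DifferentiableAt ℝ X p)
    (transport : ∀ᶠ q in 𝓝 p, fderiv ℝ f q (X q) = 0) :
    fderiv ℝ (fderiv ℝ f) p (X p) = -(fderiv ℝ f p ∘L fderiv ℝ X p) := by
  ext w
  have symm : fderiv ℝ (fderiv ℝ f) p (X p) w = fderiv ℝ (fderiv ℝ f) p w (X p) :=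
    second_derivative_symmetric_of_eventually (hf.1.mono fun _ h => h.hasFDerivAt)
      hf.2.hasFDerivAt _ _
  have product_rule := (hf.2.hasFDerivAt.clm_apply hX.hasFDerivAt).congr_of_eventuallyEq
    (f₁ := fun _ => 0) (transport.mono fun _ h => h.symm)
  have derivative_zero := DFunLike.congr_fun (product_rule.unique (hasFDerivAt_const 0 p)) w
  rw [symm]
  exact eq_neg_of_add_eq_zero_right derivative_zero

end SecondDerivative

section Flow

variable {V W : Type*} [NormedAddCommGroup V] [NormedSpace ℝ V]
  [NormedAddCommGroup W] [NormedSpace ℝ W]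

/-- The derivative in the space variable of a field on the space-time `ℝ × V`. -/
noncomputable def spatialFDeriv (f : ℝ × V → W) (p : ℝ × V) : V →L[ℝ] W :=
  fderiv ℝ f p ∘L inr ℝ ℝ V

/-- The divergence in the space variable of a time-dependent vector field on `V`, as the trace of
the spatial derivative. -/
noncomputable def spatialDiv (U : ℝ × V → V) (p : ℝ × V) : ℝ :=
  LinearMap.trace ℝ V (spatialFDeriv U p)

/-- The material derivative `∂ₜ f + (U · ∇) f`: the rate of change of `f` along the flow of the
velocity field `U`. -/
noncomputable def materialDeriv (U : ℝ × V → V) (f : ℝ × V → W) (p : ℝ × V) : W :=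
  fderiv ℝ f p (1, U p)

/-- The density `ρ₀(A) · det (∂A/∂x)` of a gas whose particles carry the Lagrangian labels `A` and
have density `ρ₀` in label space. -/
noncomputable def labelDensity (ρ₀ : V → ℝ) (A : ℝ × V → V) (p : ℝ × V) : ℝ :=
  ρ₀ (A p) * (spatialFDeriv A p).det

theorem materialDeriv_eq_add (U : ℝ × V → V) (f : ℝ × V → W) (p : ℝ × V) :
    materialDeriv U f p = fderiv ℝ f p (1, 0) + spatialFDeriv f p (U p) := by
  simp [materialDeriv, spatialFDeriv, ← map_add]

theorem TwiceDifferentiableAt.differentiableAt_spatialFDeriv {f : ℝ × V → W} {p : ℝ × V}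
    (hf : TwiceDifferentiableAt f p) : DifferentiableAt ℝ (spatialFDeriv f) p :=
  hf.2.clm_comp (differentiableAt_const _)

theorem materialDeriv_spatialFDeriv_of_transported {U : ℝ × V → V} {f : ℝ × V → W} {p : ℝ × V}
    (hf : TwiceDifferentiableAt f p) (hU : DifferentiableAt ℝ U p)
    (transport : ∀ᶠ q in 𝓝 p, materialDeriv U f q = 0) :
    materialDeriv U (spatialFDeriv f) p = -(spatialFDeriv f p ∘L spatialFDeriv U p) := by
  have fderiv_spatial : materialDeriv U (spatialFDeriv f) p =
      fderiv ℝ (fderiv ℝ f) p (1, U p) ∘L inr ℝ ℝ V := by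
    unfold materialDeriv spatialFDeriv
    rw [fderiv_clm_comp hf.2 (differentiableAt_const _)]
    simp
  have fderiv_field : fderiv ℝ (fun q => ((1 : ℝ), U q)) p = (0 : _ →L[ℝ] ℝ).prod (fderiv ℝ U p) :=
    ((hasFDerivAt_const 1 p).prodMk hU.hasFDerivAt).fderiv
  rw [fderiv_spatial, fderiv_fderiv_apply_of_transported hf
    ((differentiableAt_const 1).prodMk hU) transport, fderiv_field]
  rfl

theorem spatialFDeriv_prodMk {X : Type*} [NormedAddCommGroup X] [NormedSpace ℝ X]
    {f : ℝ × V → W} {g : ℝ × V → X} {p : ℝ × V}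
    (hf : DifferentiableAt ℝ f p) (hg : DifferentiableAt ℝ g p) :
    spatialFDeriv (fun q => (f q, g q)) p = (spatialFDeriv f p).prod (spatialFDeriv g p) := by
  rw [spatialFDeriv, hf.fderiv_prodMk hg]
  rfl

theorem materialDeriv_prodMk {X : Type*} [NormedAddCommGroup X] [NormedSpace ℝ X]
    {U : ℝ × V → V} {f : ℝ × V → W} {g : ℝ × V → X} {p : ℝ × V}
    (hf : DifferentiableAt ℝ f p) (hg : DifferentiableAt ℝ g p) :
    materialDeriv U (fun q => (f q, g q)) p = (materialDeriv U f p, materialDeriv U g p) := by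
  rw [materialDeriv, hf.fderiv_prodMk hg]
  rfl

theorem spatialDiv_smul [FiniteDimensional ℝ V] {ρ : ℝ × V → ℝ} {U : ℝ × V → V} {p : ℝ × V}
    (hρ : DifferentiableAt ℝ ρ p) (hU : DifferentiableAt ℝ U p) :
    spatialDiv (fun q => ρ q • U q) p = ρ p * spatialDiv U p + spatialFDeriv ρ p (U p) := by
  have product_rule : (spatialFDeriv (fun q => ρ q • U q) p : V →ₗ[ℝ] V) =
      ρ p • (spatialFDeriv U p : V →ₗ[ℝ] V) +
        (spatialFDeriv ρ p : V →ₗ[ℝ] ℝ).smulRight (U p) := by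
    rw [spatialFDeriv, fderiv_fun_smul hρ hU]
    rfl
  rw [spatialDiv, product_rule]
  simp [spatialDiv]

theorem materialDeriv_mul {U : ℝ × V → V} {f g : ℝ × V → ℝ} {p : ℝ × V}
    (hf : DifferentiableAt ℝ f p) (hg : DifferentiableAt ℝ g p) :
    materialDeriv U (fun q => f q * g q) p =
      f p * materialDeriv U g p + g p * materialDeriv U f p := by
  rw [materialDeriv, fderiv_fun_mul hf hg]
  rfl

theorem materialDeriv_comp {X : Type*} [NormedAddCommGroup X] [NormedSpace ℝ X]
    {U : ℝ × V → V} {g : W → X} {f : ℝ × V → W} {p : ℝ × V}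
    (hg : DifferentiableAt ℝ g (f p)) (hf : DifferentiableAt ℝ f p) :
    materialDeriv U (fun q => g (f q)) p = fderiv ℝ g (f p) (materialDeriv U f p) := by
  rw [materialDeriv, fderiv_fun_comp p hg hf]
  rfl

section Labels

variable [FiniteDimensional ℝ V] {U A : ℝ × V → V} {ρ₀ : V → ℝ} {p : ℝ × V}

theorem TwiceDifferentiableAt.differentiableAt_det_spatialFDeriv
    (hA : TwiceDifferentiableAt A p) :
    DifferentiableAt ℝ (fun q => (spatialFDeriv A q).det) p :=
  DifferentiableAt.comp p (g := fun M : V →L[ℝ] V => M.det) (differentiable_det _)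
    hA.differentiableAt_spatialFDeriv

theorem materialDeriv_det_spatialFDeriv (hA : TwiceDifferentiableAt A p)
    (hU : DifferentiableAt ℝ U p) (transport : ∀ᶠ q in 𝓝 p, materialDeriv U A q = 0) :
    materialDeriv U (fun q => (spatialFDeriv A q).det) p =
      -((spatialFDeriv A p).det * spatialDiv U p) := by
  rw [materialDeriv_comp (differentiable_det _) hA.differentiableAt_spatialFDeriv,
    materialDeriv_spatialFDeriv_of_transported hA hU transport, map_neg, fderiv_det_apply_comp]
  rfl

theorem differentiableAt_labelDensity (hA : TwiceDifferentiableAt A p)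
    (hρ₀ : DifferentiableAt ℝ ρ₀ (A p)) : DifferentiableAt ℝ (labelDensity ρ₀ A) p :=
  (hρ₀.comp p hA.1.self_of_nhds).mul hA.differentiableAt_det_spatialFDeriv

theorem materialDeriv_labelDensity (hA : TwiceDifferentiableAt A p)
    (hU : DifferentiableAt ℝ U p) (hρ₀ : DifferentiableAt ℝ ρ₀ (A p))
    (transport : ∀ᶠ q in 𝓝 p, materialDeriv U A q = 0) :
    materialDeriv U (labelDensity ρ₀ A) p = -(labelDensity ρ₀ A p * spatialDiv U p) := by
  have hA' : DifferentiableAt ℝ A p := hA.1.self_of_nhds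
  have ρ₀_conserved : materialDeriv U (fun q => ρ₀ (A q)) p = 0 := by
    rw [materialDeriv_comp hρ₀ hA', transport.self_of_nhds, map_zero]
  calc materialDeriv U (labelDensity ρ₀ A) p
      = ρ₀ (A p) * -((spatialFDeriv A p).det * spatialDiv U p) + (spatialFDeriv A p).det * 0 := by
        rw [← materialDeriv_det_spatialFDeriv hA hU transport, ← ρ₀_conserved]
        exact materialDeriv_mul (hρ₀.comp p hA') hA.differentiableAt_det_spatialFDeriv
    _ = -(labelDensity ρ₀ A p * spatialDiv U p) := by rw [labelDensity]; ring

theorem continuity_equation_of_eq_labelDensity {ρ : ℝ × V → ℝ} (hA : TwiceDifferentiableAt A p)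
    (hU : DifferentiableAt ℝ U p) (hρ₀ : DifferentiableAt ℝ ρ₀ (A p))
    (transport : ∀ᶠ q in 𝓝 p, materialDeriv U A q = 0) (hρ : ρ =ᶠ[𝓝 p] labelDensity ρ₀ A) :
    fderiv ℝ ρ p (1, 0) + spatialDiv (fun q => ρ q • U q) p = 0 := by
  have ρ_differentiable : DifferentiableAt ℝ ρ p :=
    (differentiableAt_labelDensity hA hρ₀).congr_of_eventuallyEq hρ
  have ρ_evolution : materialDeriv U ρ p = -(ρ p * spatialDiv U p) := by
    rw [hρ.self_of_nhds, ← materialDeriv_labelDensity hA hU hρ₀ transport, materialDeriv,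
      hρ.fderiv_eq, materialDeriv]
  rw [materialDeriv_eq_add] at ρ_evolution
  rw [spatialDiv_smul ρ_differentiable hU]
  linear_combination ρ_evolution

end Labels

end Flow

section Coordinates

theorem deriv_time_slice {V W : Type*} [NormedAddCommGroup V] [NormedSpace ℝ V]
    [NormedAddCommGroup W] [NormedSpace ℝ W] {f : ℝ × V → W} {t : ℝ} {z : V}
    (hf : DifferentiableAt ℝ f (t, z)) :
    deriv (fun s => f (s, z)) t = fderiv ℝ f (t, z) (1, 0) :=
  (hf.hasFDerivAt.comp_hasDerivAt t
    ((hasDerivAt_id t).prodMk (hasDerivAt_const t z))).deriv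

variable {W : Type*} [NormedAddCommGroup W] [NormedSpace ℝ W] {f : ℝ × ℝ × ℝ → W} {t x y : ℝ}

theorem deriv_fst_slice (hf : DifferentiableAt ℝ f (t, x, y)) :
    deriv (fun m => f (t, m, y)) x = spatialFDeriv f (t, x, y) (1, 0) :=
  (hf.hasFDerivAt.comp_hasDerivAt x
    ((hasDerivAt_const x t).prodMk ((hasDerivAt_id x).prodMk (hasDerivAt_const x y)))).deriv

theorem deriv_snd_slice (hf : DifferentiableAt ℝ f (t, x, y)) :
    deriv (fun m => f (t, x, m)) y = spatialFDeriv f (t, x, y) (0, 1) :=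
  (hf.hasFDerivAt.comp_hasDerivAt y
    ((hasDerivAt_const y t).prodMk ((hasDerivAt_const y x).prodMk (hasDerivAt_id y)))).deriv

theorem materialDeriv_eq_partial_derivs (u v : ℝ × ℝ × ℝ → ℝ)
    (hf : DifferentiableAt ℝ f (t, x, y)) :
    materialDeriv (fun q => (u q, v q)) f (t, x, y) =
      deriv (fun s => f (s, x, y)) t + u (t, x, y) • deriv (fun m => f (t, m, y)) x +
        v (t, x, y) • deriv (fun m => f (t, x, m)) y := by
  rw [materialDeriv_eq_add, deriv_time_slice hf, deriv_fst_slice hf, deriv_snd_slice hf,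
    ← map_smul, ← map_smul, add_assoc, ← map_add]
  simp

variable {g h : ℝ × ℝ × ℝ → ℝ}

theorem det_spatialFDeriv_prodMk (hg : DifferentiableAt ℝ g (t, x, y))
    (hh : DifferentiableAt ℝ h (t, x, y)) :
    (spatialFDeriv (fun q => (g q, h q)) (t, x, y)).det =
      deriv (fun m => g (t, m, y)) x * deriv (fun m => h (t, x, m)) y -
        deriv (fun m => g (t, x, m)) y * deriv (fun m => h (t, m, y)) x := by
  rw [deriv_fst_slice hg, deriv_snd_slice hg, deriv_fst_slice hh, deriv_snd_slice hh,
    spatialFDeriv_prodMk hg hh, det_eq_apply_basis]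
  rfl

theorem spatialDiv_prodMk (hg : DifferentiableAt ℝ g (t, x, y))
    (hh : DifferentiableAt ℝ h (t, x, y)) :
    spatialDiv (fun q => (g q, h q)) (t, x, y) =
      deriv (fun m => g (t, m, y)) x + deriv (fun m => h (t, x, m)) y := by
  rw [deriv_fst_slice hg, deriv_snd_slice hh, spatialDiv, spatialFDeriv_prodMk hg hh,
    trace_eq_apply_basis]
  rfl

end Coordinates

theorem stmt_18_general (Ω : Set (ℝ × ℝ × ℝ)) (hΩ : IsOpen Ω)
    (u v a b : ℝ → ℝ → ℝ → ℝ)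
    (hud : ∀ p ∈ Ω, DifferentiableAt ℝ (fun q : ℝ × ℝ × ℝ => u q.1 q.2.1 q.2.2) p)
    (hvd : ∀ p ∈ Ω, DifferentiableAt ℝ (fun q : ℝ × ℝ × ℝ => v q.1 q.2.1 q.2.2) p)
    (had : ∀ p ∈ Ω,
      DifferentiableAt ℝ (fun q : ℝ × ℝ × ℝ => a q.1 q.2.1 q.2.2) p ∧
      DifferentiableAt ℝ (fderiv ℝ fun q : ℝ × ℝ × ℝ => a q.1 q.2.1 q.2.2) p)
    (hbd : ∀ p ∈ Ω,
      DifferentiableAt ℝ (fun q : ℝ × ℝ × ℝ => b q.1 q.2.1 q.2.2) p ∧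
      DifferentiableAt ℝ (fderiv ℝ fun q : ℝ × ℝ × ℝ => b q.1 q.2.1 q.2.2) p)
    (ha : ∀ t x y : ℝ, (t, x, y) ∈ Ω →
      deriv (fun s => a s x y) t + u t x y * deriv (fun m => a t m y) x +
        v t x y * deriv (fun m => a t x m) y = 0)
    (hb : ∀ t x y : ℝ, (t, x, y) ∈ Ω →
      deriv (fun s => b s x y) t + u t x y * deriv (fun m => b t m y) x +
        v t x y * deriv (fun m => b t x m) y = 0)
    (ρ₀ : ℝ → ℝ → ℝ)
    (hρ₀ : Differentiable ℝ fun p : ℝ × ℝ => ρ₀ p.1 p.2)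
    (ρ : ℝ → ℝ → ℝ → ℝ)
    (hρ : ∀ t x y : ℝ, (t, x, y) ∈ Ω → ρ t x y = ρ₀ (a t x y) (b t x y) *
      (deriv (fun m => a t m y) x * deriv (fun m => b t x m) y -
       deriv (fun m => a t x m) y * deriv (fun m => b t m y) x)) :
    ∀ t x y : ℝ, (t, x, y) ∈ Ω →
      deriv (fun s => ρ s x y) t + deriv (fun m => ρ t m y * u t m y) x +
        deriv (fun m => ρ t x m * v t x m) y = 0 := by
  intro t x y hp
  let U : ℝ × ℝ × ℝ → ℝ × ℝ := fun q => (u q.1 q.2.1 q.2.2, v q.1 q.2.1 q.2.2)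
  let A : ℝ × ℝ × ℝ → ℝ × ℝ := fun q => (a q.1 q.2.1 q.2.2, b q.1 q.2.1 q.2.2)
  have near : ∀ᶠ q in 𝓝 (t, x, y), q ∈ Ω := hΩ.mem_nhds hp
  have hU : DifferentiableAt ℝ U (t, x, y) := (hud _ hp).prodMk (hvd _ hp)
  have hA : TwiceDifferentiableAt A (t, x, y) :=
    .prodMk ⟨near.mono fun q hq => (had q hq).1, (had _ hp).2⟩
      ⟨near.mono fun q hq => (hbd q hq).1, (hbd _ hp).2⟩
  have transport : ∀ᶠ q in 𝓝 (t, x, y), materialDeriv U A q = 0 := near.mono fun q hq => by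
    rw [materialDeriv_prodMk (had q hq).1 (hbd q hq).1,
      materialDeriv_eq_partial_derivs _ _ (had q hq).1,
      materialDeriv_eq_partial_derivs _ _ (hbd q hq).1]
    exact Prod.ext (ha _ _ _ hq) (hb _ _ _ hq)
  have density : (fun q => ρ q.1 q.2.1 q.2.2) =ᶠ[𝓝 (t, x, y)]
      labelDensity (fun z => ρ₀ z.1 z.2) A := near.mono fun q hq => by
    rw [labelDensity, det_spatialFDeriv_prodMk (had q hq).1 (hbd q hq).1]
    exact hρ _ _ _ hq
  have hρd : DifferentiableAt ℝ (fun q : ℝ × ℝ × ℝ => ρ q.1 q.2.1 q.2.2) (t, x, y) :=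
    (differentiableAt_labelDensity hA (hρ₀ _)).congr_of_eventuallyEq density
  have continuity := continuity_equation_of_eq_labelDensity hA hU (hρ₀ _) transport density
  have divergence := spatialDiv_prodMk (hρd.fun_mul (hud _ hp)) (hρd.fun_mul (hvd _ hp))
  rw [add_assoc, ← divergence, deriv_time_slice hρd]
  exact continuity

/-- The density formula of the characteristics representation (formula (4)):
`ρ = ρ₀(a,b)·∂(a,b)/∂(x,y)` satisfies the continuity equation. -/
theorem stmt_18 (Ω : Set (ℝ × ℝ × ℝ)) (hΩ : IsOpen Ω)
    (u v a b : ℝ → ℝ → ℝ → ℝ)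
    (hud : ∀ p ∈ Ω, DifferentiableAt ℝ (fun q : ℝ × ℝ × ℝ => u q.1 q.2.1 q.2.2) p)
    (hvd : ∀ p ∈ Ω, DifferentiableAt ℝ (fun q : ℝ × ℝ × ℝ => v q.1 q.2.1 q.2.2) p)
    (had : ∀ p ∈ Ω,
      DifferentiableAt ℝ (fun q : ℝ × ℝ × ℝ => a q.1 q.2.1 q.2.2) p ∧
      DifferentiableAt ℝ (fderiv ℝ fun q : ℝ × ℝ × ℝ => a q.1 q.2.1 q.2.2) p)
    (hbd : ∀ p ∈ Ω,
      DifferentiableAt ℝ (fun q : ℝ × ℝ × ℝ => b q.1 q.2.1 q.2.2) p ∧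
      DifferentiableAt ℝ (fderiv ℝ fun q : ℝ × ℝ × ℝ => b q.1 q.2.1 q.2.2) p)
    (ha : ∀ t x y : ℝ, (t, x, y) ∈ Ω →
      deriv (fun s => a s x y) t + u t x y * deriv (fun m => a t m y) x +
        v t x y * deriv (fun m => a t x m) y = 0)
    (hb : ∀ t x y : ℝ, (t, x, y) ∈ Ω →
      deriv (fun s => b s x y) t + u t x y * deriv (fun m => b t m y) x +
        v t x y * deriv (fun m => b t x m) y = 0)
    (u₀ v₀ : ℝ → ℝ → ℝ)
    (hu₀ : ContDiff ℝ 1 fun p : ℝ × ℝ => u₀ p.1 p.2)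
    (hv₀ : ContDiff ℝ 1 fun p : ℝ × ℝ => v₀ p.1 p.2)
    (huu₀ : ∀ t x y : ℝ, (t, x, y) ∈ Ω → u t x y = u₀ (a t x y) (b t x y))
    (hvv₀ : ∀ t x y : ℝ, (t, x, y) ∈ Ω → v t x y = v₀ (a t x y) (b t x y))
    (ρ₀ : ℝ → ℝ → ℝ)
    (hρ₀ : Differentiable ℝ fun p : ℝ × ℝ => ρ₀ p.1 p.2)
    (ρ : ℝ → ℝ → ℝ → ℝ)
    (hρ : ∀ t x y : ℝ, ρ t x y = ρ₀ (a t x y) (b t x y) *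
      (deriv (fun m => a t m y) x * deriv (fun m => b t x m) y -
       deriv (fun m => a t x m) y * deriv (fun m => b t m y) x)) :
    ∀ t x y : ℝ, (t, x, y) ∈ Ω →
      deriv (fun s => ρ s x y) t + deriv (fun m => ρ t m y * u t m y) x +
        deriv (fun m => ρ t x m * v t x m) y = 0 :=
  stmt_18_general Ω hΩ u v a b hud hvd had hbd ha hb ρ₀ hρ₀ ρ fun t x y _ => hρ t x y
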